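/- (Lemma 11) Let a be a transition density on a compact state space satisfying condition (19) and the uniform continuity condition (24): Δ(x', x) := sup_{x''} |a(x, x'') − a(x', x'')| / h(x'') → 0 as d(x, x') → 0, with the same density h as in (19). Then under i.i.d. sampling of size N from g, for every ε > 0, P[‖B(A* E_N(g), b) − B(A* g, b)‖₁ > ε] → 0 exponentially fast in N, uniformly over all probability densities g and all likelihoods b with 0 < ∫ h(x') b(x') dμ(x') < ∞. -/

import Mathlib

open MeasureTheory

/-- The Bayes operator `B(f, b)(x) = f(x) b(x) / ∫ f b dμ`. -/
noncomputable def bayesOp {α : Type*} [MeasurableSpace α] (μ : Measure α)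
    (f b : α → ℝ) : α → ℝ :=
  fun x => f x * b x / ∫ x', f x' * b x' ∂μ

/-!
Condition (19) keeps `A* ρ` between `c_a h` and `C_a h` for every probability measure `ρ`, which
makes the Bayes operator Lipschitz: `‖B(A* ρ, b) - B(A* ν, b)‖₁ ≤ 2 κ / c_a` as soon as
`|A* ρ - A* ν| ≤ κ h`, whatever `b` is. Cut the state space into finitely many cells that are so
small that, by condition (24), `a(·, y)` varies by at most `d h(y)` on each of them. Then
`κ = 2 d + C_a D` is admissible, where `D` is the total discrepancy between the `ρ`- and `ν`-masses
of the cells. For `ρ = E_N(g)` each cell mass is an average of i.i.d. indicators, so Hoeffding's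
inequality and a union bound over the cells make `D` small outside an event of exponentially small
probability. The cells depend neither on `g` nor on `b`, which gives the uniformity.
-/

open ProbabilityTheory

section BayesOp

variable {α : Type*} [MeasurableSpace α] {μ : Measure α}

lemma integral_abs_div_integral_sub_div_integral_le {p q : α → ℝ} (hp : Integrable p μ)
    (hq : Integrable q μ) (hq0 : ∀ x, 0 ≤ q x) (hP : 0 < ∫ x, p x ∂μ) (hQ : 0 < ∫ x, q x ∂μ) :
    ∫ x, |p x / (∫ y, p y ∂μ) - q x / (∫ y, q y ∂μ)| ∂μ
      ≤ 2 * (∫ x, |p x - q x| ∂μ) / ∫ x, p x ∂μ := by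
  set P := ∫ x, p x ∂μ
  set Q := ∫ x, q x ∂μ
  have hpq : Integrable (fun x => |p x - q x|) μ := (hp.sub hq).abs
  have habs : |Q - P| ≤ ∫ x, |p x - q x| ∂μ := by
    rw [abs_sub_comm, ← integral_sub hp hq]
    exact abs_integral_le_integral_abs
  have hpoint : ∀ x, |p x / P - q x / Q| ≤ |p x - q x| / P + |Q - P| / (P * Q) * q x := fun x =>
    calc |p x / P - q x / Q| = |(p x - q x) / P + (Q - P) / (P * Q) * q x| := by
          congr 1
          field_simp
          ring
      _ ≤ |(p x - q x) / P| + |(Q - P) / (P * Q) * q x| := abs_add_le _ _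
      _ = |p x - q x| / P + |Q - P| / (P * Q) * q x := by
          rw [abs_div, abs_mul, abs_div, abs_of_pos hP, abs_of_pos (mul_pos hP hQ),
            abs_of_nonneg (hq0 x)]
  calc ∫ x, |p x / P - q x / Q| ∂μ
      ≤ ∫ x, (|p x - q x| / P + |Q - P| / (P * Q) * q x) ∂μ :=
        integral_mono ((hp.div_const P).sub (hq.div_const Q)).abs
          ((hpq.div_const P).add (hq.const_mul _)) hpoint
    _ = (∫ x, |p x - q x| ∂μ) / P + |Q - P| / (P * Q) * Q := by
        rw [integral_add (hpq.div_const P) (hq.const_mul _), integral_div, integral_const_mul]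
    _ = ((∫ x, |p x - q x| ∂μ) + |Q - P|) / P := by field_simp
    _ ≤ 2 * (∫ x, |p x - q x| ∂μ) / P := by
        gcongr
        linarith

variable {f f₁ f₂ h b : α → ℝ} {c C κ : ℝ}

lemma integrable_mul_of_le_mul (hf : AEStronglyMeasurable f μ) (hb : AEStronglyMeasurable b μ)
    (hb0 : ∀ x, 0 ≤ b x) (hhb : Integrable (fun x => h x * b x) μ)
    (hf0 : ∀ x, 0 ≤ f x) (hfC : ∀ x, f x ≤ C * h x) :
    Integrable (fun x => f x * b x) μ := by
  refine (hhb.const_mul C).mono' (hf.mul hb) (.of_forall fun x => ?_)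
  rw [Real.norm_of_nonneg (mul_nonneg (hf0 x) (hb0 x)), ← mul_assoc]
  exact mul_le_mul_of_nonneg_right (hfC x) (hb0 x)

lemma integral_mul_le_const_mul_integral_mul (hfb : Integrable (fun x => f x * b x) μ)
    (hhb : Integrable (fun x => h x * b x) μ) (hb0 : ∀ x, 0 ≤ b x) (hfC : ∀ x, f x ≤ C * h x) :
    ∫ x, f x * b x ∂μ ≤ C * ∫ x, h x * b x ∂μ := by
  rw [← integral_const_mul]
  refine integral_mono hfb (hhb.const_mul C) fun x => ?_
  simpa only [mul_assoc] using mul_le_mul_of_nonneg_right (hfC x) (hb0 x)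

lemma const_mul_integral_mul_le_integral_mul (hfb : Integrable (fun x => f x * b x) μ)
    (hhb : Integrable (fun x => h x * b x) μ) (hb0 : ∀ x, 0 ≤ b x) (hcf : ∀ x, c * h x ≤ f x) :
    c * ∫ x, h x * b x ∂μ ≤ ∫ x, f x * b x ∂μ := by
  rw [← integral_const_mul]
  refine integral_mono (hhb.const_mul c) hfb fun x => ?_
  simpa only [mul_assoc] using mul_le_mul_of_nonneg_right (hcf x) (hb0 x)

lemma integral_abs_bayesOp_sub_bayesOp_le (hb : AEStronglyMeasurable b μ) (hb0 : ∀ x, 0 ≤ b x)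
    (hh0 : ∀ x, 0 ≤ h x) (hhb : Integrable (fun x => h x * b x) μ)
    (hpos : 0 < ∫ x, h x * b x ∂μ) (hc : 0 < c)
    (hf₁ : AEStronglyMeasurable f₁ μ) (hf₂ : AEStronglyMeasurable f₂ μ)
    (hf₁h : ∀ x, f₁ x ∈ Set.Icc (c * h x) (C * h x))
    (hf₂h : ∀ x, f₂ x ∈ Set.Icc (c * h x) (C * h x))
    (hκ : ∀ x, |f₁ x - f₂ x| ≤ κ * h x) :
    ∫ x, |bayesOp μ f₁ b x - bayesOp μ f₂ b x| ∂μ ≤ 2 * κ / c := by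
  have hf₁0 x : 0 ≤ f₁ x := (mul_nonneg hc.le (hh0 x)).trans (hf₁h x).1
  have hf₂0 x : 0 ≤ f₂ x := (mul_nonneg hc.le (hh0 x)).trans (hf₂h x).1
  have hi₁ := integrable_mul_of_le_mul hf₁ hb hb0 hhb hf₁0 fun x => (hf₁h x).2
  have hi₂ := integrable_mul_of_le_mul hf₂ hb hb0 hhb hf₂0 fun x => (hf₂h x).2
  have hlow₁ := const_mul_integral_mul_le_integral_mul hi₁ hhb hb0 fun x => (hf₁h x).1
  have hlow₂ := const_mul_integral_mul_le_integral_mul hi₂ hhb hb0 fun x => (hf₂h x).1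
  have hcpos := mul_pos hc hpos
  have hsub x : |f₁ x * b x - f₂ x * b x| = |f₁ x - f₂ x| * b x := by
    rw [← sub_mul, abs_mul, abs_of_nonneg (hb0 x)]
  have hdiff : ∫ x, |f₁ x * b x - f₂ x * b x| ∂μ ≤ κ * ∫ x, h x * b x ∂μ := by
    simp only [hsub]
    exact integral_mul_le_const_mul_integral_mul
      ((hi₁.sub hi₂).abs.congr (.of_forall hsub)) hhb hb0 hκ
  have hκ0 : 0 ≤ κ * ∫ x, h x * b x ∂μ := (integral_nonneg fun x => abs_nonneg _).trans hdiff
  calc ∫ x, |bayesOp μ f₁ b x - bayesOp μ f₂ b x| ∂μ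
      ≤ 2 * (∫ x, |f₁ x * b x - f₂ x * b x| ∂μ) / ∫ x, f₁ x * b x ∂μ :=
        integral_abs_div_integral_sub_div_integral_le hi₁ hi₂
          (fun x => mul_nonneg (hf₂0 x) (hb0 x)) (hcpos.trans_le hlow₁) (hcpos.trans_le hlow₂)
    _ ≤ 2 * (κ * ∫ x, h x * b x ∂μ) / (c * ∫ x, h x * b x ∂μ) := by gcongr
    _ = 2 * κ / c := by field_simp

end BayesOp

section CellDiscrepancy

variable {α β E : Type*} [MeasurableSpace α]

/-- The `ℓ¹`-distance between the laws of the simple function `p` under `ρ` and `ν`: the total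
difference of the masses of the cells `p ⁻¹' {z}`. -/
noncomputable def cellDiscrepancy (p : SimpleFunc α β) (ρ ν : Measure α) : ℝ :=
  ∑ z ∈ p.range, |ρ.real (p ⁻¹' {z}) - ν.real (p ⁻¹' {z})|

lemma card_range_simpleFunc_pos [Nonempty α] (p : SimpleFunc α β) : 0 < p.range.card :=
  Finset.card_pos.2 ⟨_, p.mem_range_self (Classical.arbitrary α)⟩

variable [NormedAddCommGroup E] [NormedSpace ℝ E]

lemma integral_comp_simpleFunc [CompleteSpace E] (ρ : Measure α) [IsFiniteMeasure ρ]
    (p : SimpleFunc α β) (u : β → E) :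
    ∫ x, u (p x) ∂ρ = ∑ z ∈ p.range, ρ.real (p ⁻¹' {z}) • u z := by
  classical
  have hsum x : u (p x) = ∑ z ∈ p.range, (p ⁻¹' {z}).indicator (fun _ => u z) x := by
    simp [Set.indicator_apply, eq_comm]
  simp_rw [hsum]
  rw [integral_finsetSum _ fun z _ => (integrable_const _).indicator (p.measurableSet_fiber z)]
  simp_rw [integral_indicator_const _ (p.measurableSet_fiber _)]

lemma norm_integral_comp_simpleFunc_sub_le [CompleteSpace E] (ρ ν : Measure α)
    [IsFiniteMeasure ρ] [IsFiniteMeasure ν] (p : SimpleFunc α β) {u : β → E} {C : ℝ}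
    (hC : ∀ z, ‖u z‖ ≤ C) :
    ‖∫ x, u (p x) ∂ρ - ∫ x, u (p x) ∂ν‖ ≤ C * cellDiscrepancy p ρ ν := by
  rw [integral_comp_simpleFunc, integral_comp_simpleFunc, ← Finset.sum_sub_distrib,
    cellDiscrepancy, Finset.mul_sum]
  refine norm_sum_le_of_le _ fun z _ => ?_
  rw [← sub_smul, norm_smul, Real.norm_eq_abs, mul_comm]
  exact mul_le_mul_of_nonneg_right (hC z) (abs_nonneg _)

lemma norm_integral_sub_integral_comp_simpleFunc_le (ρ : Measure α) [IsProbabilityMeasure ρ]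
    (p : SimpleFunc α α) {u : α → E} {d : ℝ} (hu : Integrable u ρ)
    (hd : ∀ x, ‖u x - u (p x)‖ ≤ d) :
    ‖∫ x, u x ∂ρ - ∫ x, u (p x) ∂ρ‖ ≤ d := by
  have hup : Integrable (fun x => u (p x)) ρ := (p.map u).integrable_of_isFiniteMeasure
  rw [← integral_sub hu hup]
  simpa using norm_integral_le_of_norm_le_const (μ := ρ) (.of_forall hd)

lemma norm_integral_sub_integral_le_cellDiscrepancy [CompleteSpace E] (ρ ν : Measure α)
    [IsProbabilityMeasure ρ] [IsProbabilityMeasure ν] (p : SimpleFunc α α) {u : α → E} {C d : ℝ}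
    (hρ : Integrable u ρ) (hν : Integrable u ν) (hC : ∀ x, ‖u x‖ ≤ C)
    (hd : ∀ x, ‖u x - u (p x)‖ ≤ d) :
    ‖∫ x, u x ∂ρ - ∫ x, u x ∂ν‖ ≤ 2 * d + C * cellDiscrepancy p ρ ν := by
  have hρp := norm_integral_sub_integral_comp_simpleFunc_le ρ p hρ hd
  have hνp := norm_integral_sub_integral_comp_simpleFunc_le ν p hν hd
  have hp := norm_integral_comp_simpleFunc_sub_le ρ ν p hC
  rw [← dist_eq_norm] at *
  rw [dist_comm] at hνp
  linarith [dist_triangle4 (∫ x, u x ∂ρ) (∫ x, u (p x) ∂ρ) (∫ x, u (p x) ∂ν) (∫ x, u x ∂ν)]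

end CellDiscrepancy

section MarkovOp

variable {α : Type*} [MeasurableSpace α] {a : α → α → ℝ}

/-- The Markov operator `A*` with transition density `a`, extended from densities to measures:
`A* f` is `markovOp a ν` for the measure `ν` with density `f`. -/
noncomputable def markovOp (a : α → α → ℝ) (ν : Measure α) : α → ℝ :=
  fun x => ∫ x', a x' x ∂ν

lemma isProbabilityMeasure_withDensity_ofReal {μ : Measure α} {g : α → ℝ} (hg : Integrable g μ)
    (hg0 : ∀ x, 0 ≤ g x) (hg1 : ∫ x, g x ∂μ = 1) :
    IsProbabilityMeasure (μ.withDensity fun x => ENNReal.ofReal (g x)) :=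
  ⟨by rw [withDensity_apply _ .univ, Measure.restrict_univ,
    ← ofReal_integral_eq_lintegral_ofReal hg (.of_forall hg0), hg1, ENNReal.ofReal_one]⟩

lemma markovOp_withDensity_ofReal {μ : Measure α} {g : α → ℝ} (hg : Measurable g)
    (hg0 : ∀ x, 0 ≤ g x) :
    markovOp a (μ.withDensity fun x => ENNReal.ofReal (g x)) =
      fun y => ∫ x', g x' * a x' y ∂μ := by
  funext y
  simp only [markovOp, integral_withDensity_eq_integral_toReal_smul hg.ennreal_ofReal
    (.of_forall fun _ => ENNReal.ofReal_lt_top), ENNReal.toReal_ofReal (hg0 _), smul_eq_mul]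

lemma measurable_markovOp (ha : Measurable (Function.uncurry a)) (ν : Measure α) [SFinite ν] :
    Measurable (markovOp a ν) :=
  ha.stronglyMeasurable.integral_prod_left.measurable

variable {h : α → ℝ} {c C : ℝ}

lemma integrable_apply_of_le_mul (ha : Measurable (Function.uncurry a)) (ν : Measure α)
    [IsFiniteMeasure ν] (hah : ∀ x' x, c * h x ≤ a x' x ∧ a x' x ≤ C * h x) (y : α) :
    Integrable (fun x' => a x' y) ν :=
  .of_mem_Icc _ _ ha.of_uncurry_right.aemeasurable (.of_forall fun x' => hah x' y)

lemma markovOp_mem_Icc (ha : Measurable (Function.uncurry a)) (ν : Measure α)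
    [IsProbabilityMeasure ν] (hah : ∀ x' x, c * h x ≤ a x' x ∧ a x' x ≤ C * h x) (y : α) :
    markovOp a ν y ∈ Set.Icc (c * h y) (C * h y) :=
  (convex_Icc _ _).integral_mem isClosed_Icc (.of_forall fun x' => hah x' y)
    (integrable_apply_of_le_mul ha ν hah y)

lemma abs_markovOp_sub_markovOp_le (ha : Measurable (Function.uncurry a)) (hc : 0 ≤ c)
    (hh0 : ∀ x, 0 ≤ h x) (hah : ∀ x' x, c * h x ≤ a x' x ∧ a x' x ≤ C * h x)
    (p : SimpleFunc α α) {d : ℝ} (hd : ∀ x y, |a x y - a (p x) y| ≤ d * h y) (ρ ν : Measure α)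
    [IsProbabilityMeasure ρ] [IsProbabilityMeasure ν] (y : α) :
    |markovOp a ρ y - markovOp a ν y| ≤ (2 * d + C * cellDiscrepancy p ρ ν) * h y := by
  have hnorm x : ‖a x y‖ ≤ C * h y := by
    rw [Real.norm_of_nonneg ((mul_nonneg hc (hh0 y)).trans (hah x y).1)]
    exact (hah x y).2
  calc |markovOp a ρ y - markovOp a ν y|
      ≤ 2 * (d * h y) + C * h y * cellDiscrepancy p ρ ν :=
        norm_integral_sub_integral_le_cellDiscrepancy ρ ν p (integrable_apply_of_le_mul ha ρ hah y)
          (integrable_apply_of_le_mul ha ν hah y) hnorm fun x => hd x y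
    _ = (2 * d + C * cellDiscrepancy p ρ ν) * h y := by ring

lemma integral_abs_bayesOp_markovOp_sub_le (ha : Measurable (Function.uncurry a)) (hc : 0 < c)
    (hh0 : ∀ x, 0 ≤ h x) (hah : ∀ x' x, c * h x ≤ a x' x ∧ a x' x ≤ C * h x)
    (p : SimpleFunc α α) {d : ℝ} (hd : ∀ x y, |a x y - a (p x) y| ≤ d * h y) (ρ ν : Measure α)
    [IsProbabilityMeasure ρ] [IsProbabilityMeasure ν] {μ : Measure α} {b : α → ℝ}
    (hb : AEStronglyMeasurable b μ) (hb0 : ∀ x, 0 ≤ b x)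
    (hhb : Integrable (fun x => h x * b x) μ) (hpos : 0 < ∫ x, h x * b x ∂μ) :
    ∫ x, |bayesOp μ (markovOp a ρ) b x - bayesOp μ (markovOp a ν) b x| ∂μ
      ≤ 2 * (2 * d + C * cellDiscrepancy p ρ ν) / c :=
  integral_abs_bayesOp_sub_bayesOp_le hb hb0 hh0 hhb hpos hc
    (measurable_markovOp ha ρ).aestronglyMeasurable (measurable_markovOp ha ν).aestronglyMeasurable
    (markovOp_mem_Icc ha ρ hah) (markovOp_mem_Icc ha ν hah)
    (abs_markovOp_sub_markovOp_le ha hc.le hh0 hah p hd ρ ν)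

end MarkovOp

section EmpiricalMeasure

variable {α ι : Type*} [MeasurableSpace α] [Fintype ι]

/-- The empirical distribution of the sample `xs`, giving mass `1 / card ι` to each sample point.
It is the zero measure for the empty sample. -/
noncomputable def empiricalMeasure (xs : ι → α) : Measure α :=
  (Fintype.card ι : ENNReal)⁻¹ • ∑ i, Measure.dirac (xs i)

instance isProbabilityMeasure_empiricalMeasure [Nonempty ι] (xs : ι → α) :
    IsProbabilityMeasure (empiricalMeasure xs) where
  measure_univ := by
    simp [empiricalMeasure, ENNReal.inv_mul_cancel]

lemma integral_empiricalMeasure {E : Type*} [NormedAddCommGroup E] [NormedSpace ℝ E]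
    [CompleteSpace E] (xs : ι → α) {f : α → E} (hf : StronglyMeasurable f) :
    ∫ x, f x ∂empiricalMeasure xs = (Fintype.card ι : ℝ)⁻¹ • ∑ i, f (xs i) := by
  rw [empiricalMeasure, integral_smul_measure,
    integral_finsetSum_measure fun i _ => integrable_dirac' hf enorm_lt_top]
  simp [integral_dirac' _ _ hf]

lemma markovOp_empiricalMeasure {a : α → α → ℝ} (ha : Measurable (Function.uncurry a))
    (xs : ι → α) :
    markovOp a (empiricalMeasure xs) = fun y => (Fintype.card ι : ℝ)⁻¹ * ∑ i, a (xs i) y :=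
  funext fun _ => integral_empiricalMeasure xs ha.of_uncurry_right.stronglyMeasurable

end EmpiricalMeasure

section Concentration

variable {α β ι : Type*} [MeasurableSpace α] [Fintype ι] (ν : Measure α) [IsProbabilityMeasure ν]

lemma measureReal_pi_le_sum_le {X : α → ℝ} (hX : Measurable X) {c : NNReal}
    (hsub : HasSubgaussianMGF X c ν) {r : ℝ} (hr : 0 ≤ r) :
    (Measure.pi fun _ : ι => ν).real {xs | r ≤ ∑ i, X (xs i)}
      ≤ Real.exp (-r ^ 2 / (2 * (Fintype.card ι * c))) := by
  have hindep : iIndepFun (fun (i : ι) (xs : ι → α) => X (xs i)) (Measure.pi fun _ => ν) :=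
    iIndepFun_pi fun _ => hX.aemeasurable
  have hsub_eval (i : ι) :
      HasSubgaussianMGF (fun xs : ι → α => X (xs i)) c (Measure.pi fun _ => ν) := by
    refine .of_map (Y := fun xs : ι → α => xs i) (measurable_pi_apply i).aemeasurable ?_
    rwa [(measurePreserving_eval (fun _ : ι => ν) i).map_eq]
  simpa using HasSubgaussianMGF.measure_sum_ge_le_of_iIndepFun hindep
    (s := Finset.univ) (fun i _ => hsub_eval i) hr

lemma measureReal_pi_lt_abs_mean_le {X : α → ℝ} (hX : Measurable X) {c : NNReal}
    (hsub : HasSubgaussianMGF X c ν) {t : ℝ} (ht : 0 ≤ t) :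
    (Measure.pi fun _ : ι => ν).real {xs | t < |(Fintype.card ι : ℝ)⁻¹ * ∑ i, X (xs i)|}
      ≤ 2 * Real.exp (-(t ^ 2 / (2 * c)) * (Fintype.card ι : ℝ)) := by
  cases isEmpty_or_nonempty ι
  · simp [ht.not_gt]
  have hN : (0 : ℝ) < Fintype.card ι := by exact_mod_cast Fintype.card_pos
  have htail {Y : α → ℝ} (hY : Measurable Y) (hYsub : HasSubgaussianMGF Y c ν) :
      (Measure.pi fun _ : ι => ν).real {xs | Fintype.card ι * t ≤ ∑ i, Y (xs i)}
        ≤ Real.exp (-(t ^ 2 / (2 * c)) * (Fintype.card ι : ℝ)) := by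
    refine (measureReal_pi_le_sum_le ν hY hYsub (by positivity)).trans_eq ?_
    congr 1
    field_simp
  have hcover : {xs : ι → α | t < |(Fintype.card ι : ℝ)⁻¹ * ∑ i, X (xs i)|} ⊆
      {xs | Fintype.card ι * t ≤ ∑ i, X (xs i)} ∪
        {xs | Fintype.card ι * t ≤ ∑ i, (-X) (xs i)} := by
    intro xs hxs
    rw [Set.mem_ofPred_eq, abs_mul, abs_of_pos (inv_pos.2 hN), lt_inv_mul_iff₀ hN,
      lt_abs] at hxs
    simpa using hxs.imp le_of_lt le_of_lt
  calc _ ≤ _ := measureReal_mono hcover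
    _ ≤ _ := measureReal_union_le _ _
    _ ≤ _ := add_le_add (htail hX hsub) (htail hX.neg hsub.neg)
    _ = _ := (two_mul _).symm

lemma hasSubgaussianMGF_indicator_one_sub {s : Set α} (hs : MeasurableSet s) :
    HasSubgaussianMGF (fun x => s.indicator 1 x - ν.real s) ((1 / 2) ^ 2) ν := by
  have hmem x : s.indicator (1 : α → ℝ) x ∈ Set.Icc 0 1 :=
    ⟨Set.indicator_nonneg (fun _ _ => zero_le_one) x,
      Set.indicator_le_self' (fun _ _ => zero_le_one) x⟩
  have := hasSubgaussianMGF_of_mem_Icc (μ := ν)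
    (measurable_one.indicator hs).aemeasurable (.of_forall hmem)
  simpa [integral_indicator_one hs] using this

lemma measureReal_pi_lt_abs_empiricalMeasure_sub_le {s : Set α} (hs : MeasurableSet s) {t : ℝ}
    (ht : 0 ≤ t) :
    (Measure.pi fun _ : ι => ν).real {xs | t < |(empiricalMeasure xs).real s - ν.real s|}
      ≤ 2 * Real.exp (-(2 * t ^ 2) * (Fintype.card ι : ℝ)) := by
  cases isEmpty_or_nonempty ι
  · exact measureReal_le_one.trans (by simp)
  have hmean (xs : ι → α) : (empiricalMeasure xs).real s - ν.real s =
      (Fintype.card ι : ℝ)⁻¹ * ∑ i, (s.indicator 1 (xs i) - ν.real s) := by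
    rw [← integral_indicator_one hs,
      integral_empiricalMeasure xs (measurable_one.indicator hs).stronglyMeasurable]
    simp [mul_sub]
  simp_rw [hmean]
  refine (measureReal_pi_lt_abs_mean_le ν ((measurable_one.indicator hs).sub_const _)
    (hasSubgaussianMGF_indicator_one_sub ν hs) ht).trans_eq ?_
  congr 3
  push_cast
  ring

lemma measureReal_pi_lt_cellDiscrepancy_le (p : SimpleFunc α β) {t : ℝ} (ht : 0 ≤ t) :
    (Measure.pi fun _ : ι => ν).real {xs | t < cellDiscrepancy p (empiricalMeasure xs) ν}
      ≤ 2 * p.range.card * Real.exp (-(2 * (t / p.range.card) ^ 2) * (Fintype.card ι : ℝ)) := by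
  have hα : Nonempty α := nonempty_of_isProbabilityMeasure ν
  have hk : (p.range.card : ℝ) ≠ 0 := by exact_mod_cast (card_range_simpleFunc_pos p).ne'
  have hcover : {xs : ι → α | t < cellDiscrepancy p (empiricalMeasure xs) ν} ⊆
      ⋃ z ∈ p.range, {xs | t / p.range.card <
        |(empiricalMeasure xs).real (p ⁻¹' {z}) - ν.real (p ⁻¹' {z})|} := by
    intro xs hxs
    have hsum : ∑ _z ∈ p.range, t / p.range.card < cellDiscrepancy p (empiricalMeasure xs) ν := by
      rwa [Finset.sum_const, nsmul_eq_mul, mul_div_cancel₀ _ hk]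
    simpa using Finset.exists_lt_of_sum_lt hsum
  calc _ ≤ _ := measureReal_mono hcover (measure_ne_top _ _)
    _ ≤ _ := measureReal_biUnion_finset_le _ _
    _ ≤ _ := Finset.sum_le_card_nsmul _ _ _ fun z _ =>
        measureReal_pi_lt_abs_empiricalMeasure_sub_le ν (p.measurableSet_fiber z) (by positivity)
    _ = _ := by
        rw [nsmul_eq_mul]
        ring

lemma measureReal_pi_lt_integral_abs_bayesOp_sub_le {a : α → α → ℝ}
    (ha : Measurable (Function.uncurry a)) {h : α → ℝ} {c C : ℝ} (hc : 0 < c)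
    (hh0 : ∀ x, 0 ≤ h x) (hah : ∀ x' x, c * h x ≤ a x' x ∧ a x' x ≤ C * h x)
    (p : SimpleFunc α α) {d : ℝ} (hd : ∀ x y, |a x y - a (p x) y| ≤ d * h y)
    {μ : Measure α} {b : α → ℝ} (hb : AEStronglyMeasurable b μ) (hb0 : ∀ x, 0 ≤ b x)
    (hhb : Integrable (fun x => h x * b x) μ) (hpos : 0 < ∫ x, h x * b x ∂μ)
    {t : ℝ} (ht : 0 ≤ t) :
    (Measure.pi fun _ : ι => ν).real {xs | 2 * (2 * d + |C| * t) / c <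
        ∫ x, |bayesOp μ (markovOp a (empiricalMeasure xs)) b x
          - bayesOp μ (markovOp a ν) b x| ∂μ}
      ≤ 2 * p.range.card * Real.exp (-(2 * (t / p.range.card) ^ 2) * (Fintype.card ι : ℝ)) := by
  cases isEmpty_or_nonempty ι
  · have hα : Nonempty α := nonempty_of_isProbabilityMeasure ν
    have hk : (1 : ℝ) ≤ p.range.card := by exact_mod_cast card_range_simpleFunc_pos p
    refine measureReal_le_one.trans ?_
    simp only [Fintype.card_of_isEmpty, Nat.cast_zero, mul_zero, Real.exp_zero]
    linarith
  refine (measureReal_mono fun xs hxs => ?_).trans (measureReal_pi_lt_cellDiscrepancy_le ν p ht)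
  contrapose! hxs
  simp only [Set.mem_ofPred_eq, not_lt] at hxs ⊢
  have hD0 : 0 ≤ cellDiscrepancy p (empiricalMeasure xs) ν :=
    Finset.sum_nonneg fun _ _ => abs_nonneg _
  have hCD : C * cellDiscrepancy p (empiricalMeasure xs) ν ≤ |C| * t :=
    mul_le_mul (le_abs_self C) hxs hD0 (abs_nonneg C)
  refine (integral_abs_bayesOp_markovOp_sub_le ha hc hh0 hah p hd _ ν hb hb0 hhb hpos).trans ?_
  gcongr

end Concentration

lemma exists_simpleFunc_dist_lt {α : Type*} [MeasurableSpace α] [PseudoMetricSpace α]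
    [OpensMeasurableSpace α] [Nonempty α] (hα : TotallyBounded (Set.univ : Set α)) {η : ℝ}
    (hη : 0 < η) : ∃ p : SimpleFunc α α, ∀ x, dist x (p x) < η := by
  obtain ⟨s, hs, hcover⟩ := Metric.totallyBounded_iff.1 hα η hη
  suffices h : ∃ p : SimpleFunc α α, ∀ x ∈ ⋃ y ∈ s, Metric.ball y η, dist x (p x) < η by
    obtain ⟨p, hp⟩ := h
    exact ⟨p, fun x => hp x (hcover (Set.mem_univ x))⟩
  clear hcover
  induction s, hs using Set.Finite.induction_on with
  | empty => exact ⟨.const α (Classical.arbitrary α), by simp⟩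
  | @insert y s _ _ ih =>
    classical
    obtain ⟨p, hp⟩ := ih
    refine ⟨.piecewise (Metric.ball y η) measurableSet_ball (.const α y) p, fun x hx => ?_⟩
    by_cases hxy : x ∈ Metric.ball y η
    · rwa [SimpleFunc.coe_piecewise, Set.piecewise_eq_of_mem _ _ _ hxy]
    · rw [Set.biUnion_insert] at hx
      simpa [hxy] using hp x (hx.resolve_left hxy)

theorem bayes_markov_empirical_L1_exponential_bound_compact_general
    {α : Type*} [MeasurableSpace α] [PseudoMetricSpace α] [OpensMeasurableSpace α]
    (hα : TotallyBounded (Set.univ : Set α)) (μ : Measure α)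
    (a : α → α → ℝ) (ha : Measurable (Function.uncurry a))
    (h : α → ℝ) (ca Ca : ℝ) (hca : 0 < ca) (hh0 : ∀ x, 0 ≤ h x)
    (h19 : ∀ x' x, ca * h x ≤ a x' x ∧ a x' x ≤ Ca * h x)
    (h24 : ∀ δ > (0 : ℝ), ∃ η > (0 : ℝ), ∀ x x', dist x x' < η →
      ∀ x'', |a x x'' - a x' x''| ≤ δ * h x'')
    {ε : ℝ} (hε : 0 < ε) :
    ∃ c₁ c₂ : ℝ, 0 < c₂ ∧ ∀ (ν : Measure α) [IsProbabilityMeasure ν] (b : α → ℝ),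
      AEStronglyMeasurable b μ → (∀ x, 0 ≤ b x) →
      Integrable (fun x => h x * b x) μ → 0 < ∫ x, h x * b x ∂μ →
      ∀ N : ℕ,
        (Measure.pi fun _ : Fin N => ν)
            {xs | ε < ∫ x, |bayesOp μ (markovOp a (empiricalMeasure xs)) b x
                - bayesOp μ (markovOp a ν) b x| ∂μ}
          ≤ ENNReal.ofReal (c₁ * Real.exp (-c₂ * N)) := by
  cases isEmpty_or_nonempty α
  · exact ⟨0, 1, one_pos, fun ν hν =>
      (IsProbabilityMeasure.ne_zero ν ν.eq_zero_of_isEmpty).elim⟩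
  obtain ⟨η, hη, haη⟩ := h24 (ε * ca / 8) (by positivity)
  obtain ⟨p, hp⟩ := exists_simpleFunc_dist_lt hα hη
  obtain ⟨t, ht, htC⟩ := exists_pos_mul_lt (show 0 < ε * ca / 4 by positivity) |Ca|
  have hk := card_range_simpleFunc_pos p
  refine ⟨2 * p.range.card, 2 * (t / p.range.card) ^ 2, by positivity,
    fun ν _ b hb hb0 hhb hpos N => ?_⟩
  have hthreshold : 2 * (2 * (ε * ca / 8) + |Ca| * t) / ca ≤ ε := by
    rw [div_le_iff₀ hca]
    linarith
  have hbound := measureReal_pi_lt_integral_abs_bayesOp_sub_le (ι := Fin N) ν ha hca hh0 h19 p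
    (fun x y => haη _ _ (hp x) y) hb hb0 hhb hpos ht.le
  rw [Fintype.card_fin] at hbound
  rw [← ofReal_measureReal]
  exact ENNReal.ofReal_le_ofReal <|
    (measureReal_mono fun xs hxs => hthreshold.trans_lt hxs).trans hbound

/-- Lemma 11: on a compact state space, if the transition density `a` satisfies
condition (19) (`c_a h ≤ a(x',·) ≤ C_a h`) and the uniform continuity condition (24)
(`Δ(x',x) = sup_{x''} |a(x,x'') − a(x',x'')|/h(x'') → 0` as `d(x,x') → 0`), then under
i.i.d. sampling of size `N` from `g`,
`P[‖B(A* E_N(g), b) − B(A* g, b)‖₁ > ε] → 0` exponentially fast in `N`, uniformly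
over all densities `g` and all likelihoods `b` with `0 < ∫ h b dμ < ∞`. -/
theorem bayes_markov_empirical_L1_exponential_bound_compact
    {α : Type*} [MeasurableSpace α] [MetricSpace α] [CompactSpace α] [BorelSpace α]
    (μ : Measure α) [SigmaFinite μ]
    (a : α → α → ℝ)
    (ha_meas : Measurable (Function.uncurry a))
    (ha_nonneg : ∀ x' x, 0 ≤ a x' x)
    (ha_kernel : ∀ x', ∫ x, a x' x ∂μ = 1)
    (h : α → ℝ) (ca Ca : ℝ) (hca : 0 < ca) (hcaCa : ca < Ca)
    (hh_meas : Measurable h) (hh_nonneg : ∀ x, 0 ≤ h x)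
    (hh_int : Integrable h μ) (hh_one : (∫ x, h x ∂μ) = 1)
    -- condition (19)
    (h19 : ∀ x' x, ca * h x ≤ a x' x ∧ a x' x ≤ Ca * h x)
    -- condition (24)
    (h24 : ∀ δ > (0:ℝ), ∃ η > (0:ℝ), ∀ x x', dist x x' < η →
      ∀ x'', |a x x'' - a x' x''| ≤ δ * h x'') :
    ∀ ε : ℝ, 0 < ε → ∃ c₁ c₂ : ℝ, 0 < c₂ ∧
      ∀ g : α → ℝ, Measurable g → (∀ x, 0 ≤ g x) → Integrable g μ →
        (∫ x, g x ∂μ) = 1 →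
      ∀ b : α → ℝ, Measurable b → (∀ x, 0 ≤ b x) →
        Integrable (fun x => h x * b x) μ → (0 < ∫ x, h x * b x ∂μ) →
      ∀ N : ℕ,
        (Measure.pi fun _ : Fin N => μ.withDensity fun x => ENNReal.ofReal (g x))
            {xs | ε < ∫ x, |bayesOp μ (fun y => (N : ℝ)⁻¹ * ∑ i, a (xs i) y) b x
                - bayesOp μ (fun y => ∫ x', g x' * a x' y ∂μ) b x| ∂μ}
          ≤ ENNReal.ofReal (c₁ * Real.exp (-c₂ * N)) := by
  intro ε hε
  obtain ⟨c₁, c₂, hc₂, hbound⟩ := bayes_markov_empirical_L1_exponential_bound_compact_general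
    isCompact_univ.totallyBounded μ a ha_meas h ca Ca hca hh_nonneg h19 h24 hε
  refine ⟨c₁, c₂, hc₂, fun g hg hg0 hgi hg1 b hb hb0 hhb hpos N => ?_⟩
  have := isProbabilityMeasure_withDensity_ofReal hgi hg0 hg1
  simpa only [markovOp_empiricalMeasure ha_meas, markovOp_withDensity_ofReal hg hg0,
    Fintype.card_fin] using
    hbound (μ.withDensity fun x => ENNReal.ofReal (g x)) b hb.aestronglyMeasurable hb0 hhb hpos N
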